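/- Let n ≥ 1 and P_n = ℤ[X_1,…,X_n]. For each w ∈ S_n fix a reduced expression and let ∂_w be the corresponding composite of Demazure operators. Then for every endomorphism φ of P_n that is linear over the subring P_n^{S_n} of symmetric polynomials, there exists a unique family (P_w)_{w ∈ S_n} of elements of P_n such that φ(Q) = ∑_{w ∈ S_n} P_w · ∂_w(Q) for all Q ∈ P_n. Consequently End_{P_n^{S_n}}(P_n) is a free left P_n-module with basis (∂_w)_{w∈S_n}, hence a free P_n^{S_n}-module of rank (n!)². -/

import Mathlib

open MvPolynomial

/-- The adjacent transposition `s i = (i, i+1)` in the symmetric group on `{1, …, n+1}`. -/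
def adjTrans (n : ℕ) (i : Fin n) : Equiv.Perm (Fin (n + 1)) :=
  Equiv.swap i.castSucc i.succ

/-- The number of inversions of a permutation `w` of `{1, …, n+1}`. -/
def inversions (n : ℕ) (w : Equiv.Perm (Fin (n + 1))) : ℕ :=
  (Finset.univ.filter fun p : Fin (n + 1) × Fin (n + 1) => p.1 < p.2 ∧ w p.2 < w p.1).card

/-!
Over the symmetric polynomials, `P_n` is spanned by the `(n + 1)!` staircase monomials, so it is
enough that the square matrix of values `∂_w` (staircase monomial) is invertible. Both the number
of inversions and the degree of the staircase monomials have average `n (n + 1) / 4`. As each `∂_i`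
lowers degrees by one, the Leibniz formula shows that the determinant is a constant. That constant
is nonzero over every residue field of the base ring: there `∂_w` is a combination of the
automorphisms `Q ↦ v Q`, triangular with respect to the number of inversions of `v` and with
nonzero leading coefficient at `v = w`, and distinct automorphisms are linearly independent by
Dedekind. Hence the determinant is a unit.
-/

section LinearAlgebra

theorem linearIndependent_of_triangular {ι α K V : Type*} [Finite ι] [Preorder α]
    [WellFoundedLT α] [DivisionRing K] [AddCommGroup V] [Module K V] (r : ι → α) {e f : ι → V}
    (he : LinearIndependent K e)
    (h : ∀ i, ∃ c : K, c ≠ 0 ∧ f i - c • e i ∈ Submodule.span K (e '' {j | r j < r i})) :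
    LinearIndependent K f := by
  have mem_span (i : ι) : e i ∈ Submodule.span K (Set.range f) := by
    induction i using (InvImage.wf r wellFounded_lt).induction with
    | _ i ih =>
      obtain ⟨c, hc, hmem⟩ := h i
      have hsub : f i - c • e i ∈ Submodule.span K (Set.range f) :=
        Submodule.span_le.2 (Set.image_subset_iff.2 ih) hmem
      have hf : f i ∈ Submodule.span K (Set.range f) := Submodule.subset_span (Set.mem_range_self i)
      refine (Submodule.smul_mem_iff _ hc).1 ?_
      simpa using sub_mem hf hsub
  cases nonempty_fintype ι
  rw [linearIndependent_iff_card_le_finrank_span] at he ⊢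
  have := Module.Finite.span_of_finite K (Set.finite_range f)
  exact he.trans (Submodule.finrank_mono (Submodule.span_le.2 (Set.range_subset_iff.2 mem_span)))

variable {ι S A : Type*} [CommRing S] [CommRing A] [Algebra S A]

/-- The values of the endomorphisms `T i` at the vectors `b j`. If `b` spans `A` over `S`, an
`A`-linear combination of the `T i` is determined by the combination of the rows. -/
def evalMatrix (T : ι → Module.End S A) (b : ι → A) : Matrix ι ι A :=
  Matrix.of fun i j => T i (b j)

variable [Fintype ι] [DecidableEq ι] {T : ι → Module.End S A} {b : ι → A}

open Matrix in
theorem existsUnique_eq_sum_smul (hb : Submodule.span S (Set.range b) = ⊤)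
    (hdet : IsUnit (evalMatrix T b).det) (φ : Module.End S A) :
    ∃! P : ι → A, φ = ∑ i, P i • T i := by
  have hiff (P : ι → A) : φ = ∑ i, P i • T i ↔ P ᵥ* evalMatrix T b = φ ∘ b := by
    have hvec : P ᵥ* evalMatrix T b = ⇑(∑ i, P i • T i : Module.End S A) ∘ b := by
      ext j
      simp [vecMul, dotProduct, evalMatrix]
    rw [hvec]
    exact ⟨fun h => by rw [← h], fun h => (LinearMap.ext_on_range hb (congrFun h)).symm⟩
  have hM : IsUnit (evalMatrix T b) := (isUnit_iff_isUnit_det _).2 hdet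
  simp only [hiff]
  exact Function.Bijective.existsUnique
    ⟨vecMul_injective_of_isUnit hM, vecMul_surjective_iff_isUnit.2 hM⟩ _

open Matrix in
theorem map_det_evalMatrix_ne_zero (hb : Submodule.span S (Set.range b) = ⊤) {K : Type*} [Field K]
    (π : A →+* K) (hT : LinearIndependent K fun i => π ∘ T i) : π (evalMatrix T b).det ≠ 0 := by
  intro h
  rw [RingHom.map_det] at h
  obtain ⟨c, hc, hc_row⟩ := exists_vecMul_eq_zero_iff.2 h
  let F : A →ₛₗ[π.comp (algebraMap S A)] K :=
    { toFun := fun Q => ∑ i, c i * π (T i Q)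
      map_add' := fun P Q => by simp only [map_add, mul_add, Finset.sum_add_distrib]
      map_smul' := fun s Q => by
        simp only [map_smul, RingHom.comp_apply, smul_eq_mul, Finset.mul_sum]
        refine Finset.sum_congr rfl fun i _ => ?_
        rw [Algebra.smul_def, map_mul, mul_left_comm] }
  have hF : F = 0 := LinearMap.ext_on_range hb fun j => congrFun hc_row j
  refine hc (funext (Fintype.linearIndependent_iff.1 hT c ?_))
  ext Q
  simpa [F] using DFunLike.congr_fun hF Q

end LinearAlgebra

section Staircase

/-- Exponents `a` of the staircase monomials in `N` variables, those with `a i < N - i`. -/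
abbrev StaircaseExponent (N : ℕ) : Type := (i : Fin N) → Fin (N - i)

theorem card_staircaseExponent (N : ℕ) : Fintype.card (StaircaseExponent N) = N.factorial := by
  rw [Fintype.card_pi]
  simp only [Fintype.card_fin]
  rw [Fin.prod_univ_eq_prod_range (fun i => N - i) N, ← Nat.descFactorial_eq_prod_range,
    Nat.descFactorial_self]

theorem two_mul_sum_staircaseExponent (N : ℕ) :
    2 * ∑ a : StaircaseExponent N, ∑ i, (a i : ℕ) = N.factorial * ∑ i : Fin N, (i : ℕ) := by
  let rev : StaircaseExponent N ≃ StaircaseExponent N := Equiv.piCongrRight fun _ => Fin.revPerm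
  have add_rev (a : StaircaseExponent N) :
      ∑ i, (a i : ℕ) + ∑ i, (rev a i : ℕ) = ∑ i : Fin N, (i : ℕ) := by
    rw [← Finset.sum_add_distrib, ← Equiv.sum_comp Fin.revPerm fun i : Fin N => (i : ℕ)]
    refine Finset.sum_congr rfl fun i _ => ?_
    have := (a i).isLt
    simp only [rev, Equiv.piCongrRight_apply, Pi.map_apply, Fin.revPerm_apply, Fin.val_rev]
    omega
  calc 2 * ∑ a : StaircaseExponent N, ∑ i, (a i : ℕ)
      = ∑ a, (∑ i, (a i : ℕ) + ∑ i, (rev a i : ℕ)) := by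
        rw [two_mul, Finset.sum_add_distrib, rev.sum_comp fun a => ∑ i, (a i : ℕ)]
    _ = N.factorial * ∑ i : Fin N, (i : ℕ) := by
        simp only [add_rev, Finset.sum_const, Finset.card_univ, card_staircaseExponent,
          smul_eq_mul]

section AdjoinRoot

open Algebra Polynomial

variable {R A : Type*} [CommRing R] [CommRing A] [Algebra R A]

theorem mem_lifts_adjoin_of_X_sub_C_mul_mem_lifts {x : A} {q : A[X]}
    (h : (Polynomial.X - Polynomial.C x) * q ∈ lifts (algebraMap R A)) :
    q ∈ lifts (algebraMap (adjoin R {x}) A) := by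
  obtain ⟨f, hf⟩ := (mem_lifts _).1 h
  let y : adjoin R {x} := ⟨x, self_mem_adjoin_singleton R x⟩
  let g : (adjoin R {x})[X] := f.map (algebraMap R (adjoin R {x}))
  refine (mem_lifts _).2 ⟨g /ₘ (Polynomial.X - Polynomial.C y), ?_⟩
  rw [map_divByMonic _ (monic_X_sub_C y), Polynomial.map_map, ← IsScalarTower.algebraMap_eq, hf,
    Polynomial.map_sub, Polynomial.map_X, Polynomial.map_C]
  exact mul_divByMonic_cancel_left q (monic_X_sub_C x)

theorem adjoin_adjoin_eq_top_of_adjoin_insert_eq_top {x : A} {s : Set A}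
    (h : adjoin R (insert x s) = ⊤) : adjoin (adjoin R {x}) s = ⊤ := by
  refine Subalgebra.restrictScalars_injective R ?_
  rw [← adjoin_union_eq_adjoin_adjoin, Set.singleton_union, h, Subalgebra.restrictScalars_top]

theorem span_pow_adjoin_eq_top {x : A} {f : R[X]} (hf : f.Monic)
    (hx : Polynomial.aeval x f = 0) :
    Submodule.span R (Set.range fun m : Fin f.natDegree =>
      (⟨x, self_mem_adjoin_singleton R x⟩ : adjoin R {x}) ^ (m : ℕ)) = ⊤ := by
  refine Submodule.map_injective_of_injective (f := (adjoin R {x}).val.toLinearMap)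
    Subtype.val_injective ?_
  have h := Submodule.span_range_natDegree_eq_adjoin hf hx
  rw [Submodule.map_span, ← Set.range_comp, Submodule.map_top]
  convert h using 2
  · ext y
    simp [Fin.exists_iff]
  · ext y
    simp

-- One universe, because the induction replaces `R` by the subalgebra `R[x 0]` of `A`.
theorem span_staircase_eq_top.{u} {R A : Type u} [CommRing R] [CommRing A] [Algebra R A] {N : ℕ}
    (x : Fin N → A) (hx : ∏ i, (Polynomial.X - Polynomial.C (x i)) ∈ lifts (algebraMap R A))
    (hgen : Algebra.adjoin R (Set.range x) = ⊤) :
    Submodule.span R (Set.range fun a : StaircaseExponent N => ∏ i, x i ^ (a i : ℕ)) = ⊤ := by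
  nontriviality A
  induction N generalizing R with
  | zero =>
    rw [Set.range_eq_empty, Algebra.adjoin_empty] at hgen
    simp [Set.range_const, ← Submodule.one_eq_span, ← Algebra.toSubmodule_bot, hgen]
  | succ N ih =>
    obtain ⟨f, hf, hdeg, hmonic⟩ := lifts_and_natDegree_eq_and_monic hx
      (monic_prod_of_monic _ _ fun i _ => monic_X_sub_C (x i))
    rw [natDegree_prod_of_monic _ _ fun i _ => monic_X_sub_C (x i)] at hdeg
    have hroot : Polynomial.aeval (x 0) f = 0 := by
      rw [← eval_map_algebraMap, hf, Polynomial.eval_prod]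
      exact Finset.prod_eq_zero (Finset.mem_univ 0) (by simp)
    rw [Fin.prod_univ_succ] at hx
    rw [Fin.range_fin_succ] at hgen
    -- Over `R[x 0]` the remaining elements are the roots of the quotient by `X - x 0`.
    have hspan := ih (R := Algebra.adjoin R {x 0}) (Fin.tail x)
      (mem_lifts_adjoin_of_X_sub_C_mul_mem_lifts hx)
      (adjoin_adjoin_eq_top_of_adjoin_insert_eq_top hgen)
    rw [← top_le_iff, ← Submodule.restrictScalars_top R (Algebra.adjoin R {x 0}) A, ← hspan,
      ← Submodule.span_smul_of_span_eq_top (span_pow_adjoin_eq_top hmonic hroot)]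
    refine Submodule.span_mono ?_
    rintro _ ⟨_, ⟨m, rfl⟩, _, ⟨a, rfl⟩, rfl⟩
    refine ⟨Fin.cons (α := fun i : Fin (N + 1) => Fin (N + 1 - i)) (m.cast (by simp [hdeg]))
      (fun i => (a i).cast (by simp)), ?_⟩
    simp only [Fin.prod_univ_succ, Algebra.smul_def, map_pow]
    rfl

end AdjoinRoot

variable {R : Type*} [CommRing R] {N : ℕ}

theorem prod_X_sub_C_mem_lifts_symmetricSubalgebra {σ : Type*} [Fintype σ] :
    ∏ i, (Polynomial.X - Polynomial.C (X i : MvPolynomial σ R)) ∈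
      Polynomial.lifts (algebraMap (symmetricSubalgebra σ R) (MvPolynomial σ R)) := by
  let f : Polynomial (MvPolynomial σ R) := ∏ i, (Polynomial.X - Polynomial.C (X i))
  have map_rename (e : Equiv.Perm σ) :
      f.map (rename e : MvPolynomial σ R →ₐ[R] MvPolynomial σ R).toRingHom = f := by
    simpa [f, Polynomial.map_prod] using
      Equiv.prod_comp e fun i => Polynomial.X - Polynomial.C (X i : MvPolynomial σ R)
  have isSymmetric_coeff (k : ℕ) : (f.coeff k).IsSymmetric := fun e => by
    simpa [Polynomial.coeff_map] using congrArg (Polynomial.coeff · k) (map_rename e)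
  exact (Polynomial.lifts_iff_coeff_lifts f).2 fun k => ⟨⟨_, isSymmetric_coeff k⟩, rfl⟩

theorem adjoin_symmetricSubalgebra_range_X {σ : Type*} :
    Algebra.adjoin (symmetricSubalgebra σ R) (Set.range (X : σ → MvPolynomial σ R)) = ⊤ := by
  refine top_le_iff.1 fun p _ => ?_
  induction p using MvPolynomial.induction_on with
  | C a => exact Subalgebra.algebraMap_mem _ (algebraMap R (symmetricSubalgebra σ R) a)
  | add p q hp hq => exact add_mem (hp trivial) (hq trivial)
  | mul_X p i hp => exact mul_mem (hp trivial) (Algebra.subset_adjoin (Set.mem_range_self i))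

/-- The staircase monomial with exponent `a`. -/
noncomputable def staircaseMonomial (R : Type*) [CommRing R] {N : ℕ} (a : StaircaseExponent N) :
    MvPolynomial (Fin N) R :=
  ∏ i, X i ^ (a i : ℕ)

theorem span_staircaseMonomial (R : Type*) [CommRing R] {ι : Type*}
    (e : ι ≃ StaircaseExponent N) :
    Submodule.span (symmetricSubalgebra (Fin N) R)
      (Set.range (staircaseMonomial R ∘ e)) = ⊤ := by
  rw [e.surjective.range_comp]
  exact span_staircase_eq_top X prod_X_sub_C_mem_lifts_symmetricSubalgebra
    adjoin_symmetricSubalgebra_range_X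

theorem totalDegree_staircaseMonomial_le (a : StaircaseExponent N) :
    (staircaseMonomial R a).totalDegree ≤ ∑ i, (a i : ℕ) := by
  refine (totalDegree_finsetProd _ _).trans (Finset.sum_le_sum fun i _ => ?_)
  rw [X_pow_eq_monomial]
  exact (totalDegree_monomial_le _ _).trans_eq (Finsupp.degree_single _ _)

end Staircase
section Inversions

variable {n : ℕ}

theorem adjTrans_lt_adjTrans {i : Fin n} {p q : Fin (n + 1)} (hpq : p < q)
    (hne : (p, q) ≠ (i.castSucc, i.succ)) : adjTrans n i p < adjTrans n i q := by
  simp only [ne_eq, Prod.mk.injEq, not_and, Fin.ext_iff, Fin.val_castSucc, Fin.val_succ] at hne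
  simp only [adjTrans, Equiv.swap_apply_def, Fin.ext_iff, Fin.lt_def, apply_ite Fin.val,
    Fin.val_castSucc, Fin.val_succ] at hpq ⊢
  split_ifs <;> omega

theorem inversions_mul_adjTrans_le (w : Equiv.Perm (Fin (n + 1))) (i : Fin n) :
    inversions n (w * adjTrans n i) ≤ inversions n w + 1 := by
  unfold inversions
  rw [← tsub_le_iff_right]
  refine Finset.pred_card_le_card_erase (a := (i.castSucc, i.succ)) |>.trans ?_
  refine Finset.card_le_card_of_injOn (Prod.map (adjTrans n i) (adjTrans n i)) ?_
    ((adjTrans n i).injective.prodMap (adjTrans n i).injective).injOn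
  rintro ⟨p, q⟩ hpq
  obtain ⟨hne, hmem⟩ := Finset.mem_erase.1 hpq
  obtain ⟨-, hlt, hw⟩ := Finset.mem_filter.1 hmem
  exact Finset.mem_coe.2 (Finset.mem_filter.2
    ⟨Finset.mem_univ _, adjTrans_lt_adjTrans hlt hne, hw⟩)

theorem inversions_one : inversions n 1 = 0 :=
  Finset.card_eq_zero.2 (Finset.filter_false_of_mem fun _ _ h => lt_asymm h.1 h.2)

theorem inversions_prod_le_length (L : List (Fin n)) :
    inversions n (L.map (adjTrans n)).prod ≤ L.length := by
  induction L using List.reverseRecOn with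
  | nil => exact inversions_one.le
  | append_singleton L i ih =>
    simpa using (inversions_mul_adjTrans_le (L.map (adjTrans n)).prod i).trans
      (Nat.add_le_add_right ih 1)

theorem inversions_mul_revPerm (w : Equiv.Perm (Fin (n + 1))) :
    inversions n (w * Fin.revPerm) = (Finset.univ.filter
      fun p : Fin (n + 1) × Fin (n + 1) => p.1 < p.2 ∧ ¬ w p.2 < w p.1).card := by
  let e : Fin (n + 1) × Fin (n + 1) ≃ Fin (n + 1) × Fin (n + 1) :=
    (Equiv.prodComm _ _).trans (Fin.revPerm.prodCongr Fin.revPerm)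
  refine Finset.card_equiv e fun p => ?_
  have key (h : p.1 < p.2) : w p.2.rev < w p.1.rev ↔ w p.2.rev ≤ w p.1.rev :=
    ⟨le_of_lt, fun h' => h'.lt_of_ne fun h'' => h.ne' (Fin.rev_injective (w.injective h''))⟩
  simp +contextual [e, key]

theorem inversions_add_inversions_mul_revPerm (w : Equiv.Perm (Fin (n + 1))) :
    inversions n w + inversions n (w * Fin.revPerm) = ∑ i : Fin (n + 1), (i : ℕ) := by
  rw [inversions_mul_revPerm, inversions]
  simp only [← Finset.filter_filter]
  rw [Finset.card_filter_add_card_filter_not, Finset.card_filter, Fintype.sum_prod_type_right]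
  refine Finset.sum_congr rfl fun i _ => ?_
  rw [← Finset.card_filter, Finset.filter_gt_eq_Iio, Fin.card_Iio]

theorem two_mul_sum_inversions (n : ℕ) :
    2 * ∑ w, inversions n w = (n + 1).factorial * ∑ i : Fin (n + 1), (i : ℕ) := by
  calc 2 * ∑ w, inversions n w
      = ∑ w, (inversions n w + inversions n (w * Fin.revPerm)) := by
        rw [two_mul, Finset.sum_add_distrib]
        exact congrArg _ (Equiv.sum_comp (Equiv.mulRight Fin.revPerm) (inversions n)).symm
    _ = (n + 1).factorial * ∑ i : Fin (n + 1), (i : ℕ) := by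
        simp only [inversions_add_inversions_mul_revPerm, Finset.sum_const, Finset.card_univ,
          Fintype.card_perm, Fintype.card_fin, smul_eq_mul]

theorem sum_inversions (n : ℕ) :
    ∑ w, inversions n w = ∑ a : StaircaseExponent (n + 1), ∑ i, (a i : ℕ) :=
  Nat.eq_of_mul_eq_mul_left two_pos <|
    (two_mul_sum_inversions n).trans (two_mul_sum_staircaseExponent (n + 1)).symm

end Inversions

section Demazure

variable {σ R : Type*} [CommRing R]

/-- `D` is the Demazure operator of the transposition `(a, b)`, that is, `D P` is the quotient of
`P - s P` by `X b - X a`; for `a < b` this sign of the denominator is opposite to the usual one.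
Linearity is not part of the definition, as `X b - X a` is not a zero divisor. -/
def IsDemazureOperator [DecidableEq σ] (a b : σ) (D : MvPolynomial σ R → MvPolynomial σ R) :
    Prop :=
  ∀ P, (X b - X a) * D P = P - rename (Equiv.swap a b) P

section Degree

variable [LinearOrder σ] [WellFoundedGT σ] {a b : σ}

open MonomialOrder in
theorem totalDegree_X_sub_X_mul (hab : a < b) {P : MvPolynomial σ R} (hP : P ≠ 0) :
    ((X b - X a) * P).totalDegree = P.totalDegree + 1 := by
  obtain _ | _ := subsingleton_or_nontrivial R
  · exact absurd (Subsingleton.elim P 0) hP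
  have hlt : degLex.degree (X b : MvPolynomial σ R) ≺[degLex]
      degLex.degree (X a : MvPolynomial σ R) := by
    simpa only [degree_X, degLex_single_lt_iff] using hab
  have hdeg : degLex.degree (X a - X b : MvPolynomial σ R) = Finsupp.single a 1 := by
    rw [degree_sub_of_lt hlt, degree_X]
  have hlead : degLex.leadingCoeff (X a - X b : MvPolynomial σ R) = 1 := by
    rw [leadingCoeff_sub_of_lt hlt, leadingCoeff_X]
  rw [← neg_sub, neg_mul, totalDegree_neg, ← degree_degLexDegree,
    degree_mul_of_isRegular_left (hlead ▸ isRegular_one) hP, hdeg, map_add, Finsupp.degree_single,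
    degree_degLexDegree, add_comm]

theorem isLeftRegular_X_sub_X (hab : a < b) :
    IsLeftRegular (X b - X a : MvPolynomial σ R) := by
  refine isLeftRegular_iff_right_eq_zero_of_mul.2 fun P hP => ?_
  by_contra hne
  simpa [hP] using totalDegree_X_sub_X_mul hab hne

namespace IsDemazureOperator

variable {D : MvPolynomial σ R → MvPolynomial σ R}

theorem totalDegree_add_one_le (hD : IsDemazureOperator a b D) (hab : a < b)
    {Q : MvPolynomial σ R} (hQ : D Q ≠ 0) : (D Q).totalDegree + 1 ≤ Q.totalDegree := by
  rw [← totalDegree_X_sub_X_mul hab hQ, hD]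
  exact (totalDegree_sub _ _).trans (max_le le_rfl (totalDegree_rename_le _ _))

/-- A Demazure operator as an endomorphism over the symmetric polynomials. -/
def toLinearMap (hD : IsDemazureOperator a b D) (hab : a < b) :
    Module.End (symmetricSubalgebra σ R) (MvPolynomial σ R) where
  toFun := D
  map_add' P Q := isLeftRegular_X_sub_X hab <| by
    simp only [mul_add, hD _, map_add]
    ring
  map_smul' s Q := isLeftRegular_X_sub_X hab <| by
    have hs : rename (Equiv.swap a b) (s : MvPolynomial σ R) = s := s.2 _
    simp only [Subalgebra.smul_def, smul_eq_mul, mul_left_comm _ (s : MvPolynomial σ R), hD _,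
      map_mul, hs, mul_sub, RingHom.id_apply]

end IsDemazureOperator

end Degree

section Word

variable {n : ℕ} {D : Fin n → MvPolynomial (Fin (n + 1)) R → MvPolynomial (Fin (n + 1)) R}
  (hD : ∀ i, IsDemazureOperator i.castSucc i.succ (D i))

/-- The composite `∂_{i₁} ∘ ⋯ ∘ ∂_{iᵣ}` of Demazure operators along the word `i₁, …, iᵣ`. -/
noncomputable def demazureWord (L : List (Fin n)) :
    Module.End (symmetricSubalgebra (Fin (n + 1)) R) (MvPolynomial (Fin (n + 1)) R) :=
  (L.map fun i => (hD i).toLinearMap i.castSucc_lt_succ).prod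

theorem demazureWord_cons_apply (i : Fin n) (L : List (Fin n)) (Q : MvPolynomial (Fin (n + 1)) R) :
    demazureWord hD (i :: L) Q = D i (demazureWord hD L Q) := by
  rw [demazureWord, List.map_cons, List.prod_cons]
  rfl

theorem demazureWord_append_singleton_apply (L : List (Fin n)) (i : Fin n)
    (Q : MvPolynomial (Fin (n + 1)) R) :
    demazureWord hD (L ++ [i]) Q = demazureWord hD L (D i Q) := by
  rw [demazureWord, List.map_append, List.prod_append, List.map_singleton, List.prod_singleton]
  rfl

theorem demazureWord_apply (L : List (Fin n)) (Q : MvPolynomial (Fin (n + 1)) R) :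
    demazureWord hD L Q = L.foldr (fun i Q' => D i Q') Q := by
  induction L with
  | nil => rfl
  | cons i L ih => rw [demazureWord_cons_apply, ih, List.foldr_cons]

theorem totalDegree_demazureWord_add_length_le {L : List (Fin n)}
    {Q : MvPolynomial (Fin (n + 1)) R} (h : demazureWord hD L Q ≠ 0) :
    (demazureWord hD L Q).totalDegree + L.length ≤ Q.totalDegree := by
  induction L with
  | nil => rfl
  | cons i L ih =>
    rw [demazureWord_cons_apply] at h ⊢
    have hdrop := (hD i).totalDegree_add_one_le i.castSucc_lt_succ h
    have hne : demazureWord hD L Q ≠ 0 := fun h0 =>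
      h (h0 ▸ map_zero ((hD i).toLinearMap i.castSucc_lt_succ))
    have := ih hne
    rw [List.length_cons]
    omega

end Word

section Twisted

variable {K : Type*} [Field K] {π : MvPolynomial σ R →+* K}

/-- The ring homomorphism `π` precomposed with the action of the permutation `v`. -/
noncomputable def twistedEval (π : MvPolynomial σ R →+* K) (v : Equiv.Perm σ) :
    MvPolynomial σ R → K :=
  π ∘ rename v

theorem linearIndependent_twistedEval (hπ : Function.Injective fun j => π (X j)) :
    LinearIndependent K (twistedEval π) := by
  let χ (v : Equiv.Perm σ) : MvPolynomial σ R →* K := π.comp (rename v).toRingHom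
  have hχ : Function.Injective χ := fun v v' h =>
    Equiv.ext fun j => hπ (by simpa [χ] using DFunLike.congr_fun h (X j))
  exact (linearIndependent_monoidHom (MvPolynomial σ R) K).comp χ hχ

theorem IsDemazureOperator.twistedEval_comp [DecidableEq σ] {a b : σ}
    {D : MvPolynomial σ R → MvPolynomial σ R} (hD : IsDemazureOperator a b D) (hab : a ≠ b)
    (hπ : Function.Injective fun j => π (X j)) (v : Equiv.Perm σ) :
    twistedEval π v ∘ D = (π (X (v b)) - π (X (v a)))⁻¹ •
      (twistedEval π v - twistedEval π (v * Equiv.swap a b)) := by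
  ext Q
  have hne : π (X (v b)) - π (X (v a)) ≠ 0 :=
    sub_ne_zero.2 fun h => hab (v.injective (hπ h)).symm
  have h := congrArg (twistedEval π v) (hD Q)
  simp only [twistedEval, Function.comp_apply, map_mul, map_sub, rename_X, rename_rename] at h
  simpa [twistedEval, eq_inv_mul_iff_mul_eq₀ hne] using h

end Twisted

section Triangular

variable {n : ℕ} {D : Fin n → MvPolynomial (Fin (n + 1)) R → MvPolynomial (Fin (n + 1)) R}
  {K : Type*} [Field K] {π : MvPolynomial (Fin (n + 1)) R →+* K}

/-- The filtration of the span of the functions `twistedEval π v` by the number of inversions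
of `v`, with `k` as a strict bound. -/
noncomputable def inversionFiltration (π : MvPolynomial (Fin (n + 1)) R →+* K) (k : ℕ) :
    Submodule K (MvPolynomial (Fin (n + 1)) R → K) :=
  Submodule.span K (twistedEval π '' {v | inversions n v < k})

theorem twistedEval_mem_inversionFiltration {v : Equiv.Perm (Fin (n + 1))} {k : ℕ}
    (h : inversions n v < k) : twistedEval π v ∈ inversionFiltration π k :=
  Submodule.subset_span (Set.mem_image_of_mem _ h)

theorem comp_mem_inversionFiltration (hD : ∀ i, IsDemazureOperator i.castSucc i.succ (D i))
    (hπ : Function.Injective fun j => π (X j)) (i : Fin n) {k : ℕ}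
    {F : MvPolynomial (Fin (n + 1)) R → K} (hF : F ∈ inversionFiltration π k) :
    F ∘ D i ∈ inversionFiltration π (k + 1) := by
  suffices inversionFiltration π k ≤
      (inversionFiltration π (k + 1)).comap (LinearMap.funLeft K K (D i)) from this hF
  refine Submodule.span_le.2 (Set.image_subset_iff.2 fun v (hv : inversions n v < k) => ?_)
  change twistedEval π v ∘ D i ∈ inversionFiltration π (k + 1)
  rw [(hD i).twistedEval_comp i.castSucc_lt_succ.ne hπ]
  exact Submodule.smul_mem _ _ <| sub_mem
    (twistedEval_mem_inversionFiltration (by omega))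
    (twistedEval_mem_inversionFiltration ((inversions_mul_adjTrans_le v i).trans_lt (by omega)))

theorem exists_comp_demazureWord_sub_smul_mem
    (hD : ∀ i, IsDemazureOperator i.castSucc i.succ (D i))
    (hπ : Function.Injective fun j => π (X j)) (L : List (Fin n)) :
    ∃ c : K, c ≠ 0 ∧ π ∘ demazureWord hD L - c • twistedEval π (L.map (adjTrans n)).prod ∈
      inversionFiltration π L.length := by
  induction L using List.reverseRecOn with
  | nil =>
    refine ⟨1, one_ne_zero, ?_⟩
    have h : π ∘ demazureWord hD [] = twistedEval π 1 := by
      ext Q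
      simp [twistedEval, demazureWord]
    simp [h]
  | append_singleton L i ih =>
    obtain ⟨c, hc, hmem⟩ := ih
    set p := (L.map (adjTrans n)).prod with hp
    set d := π (X (p i.succ)) - π (X (p i.castSucc))
    have hd : d ≠ 0 := sub_ne_zero.2 fun h => i.castSucc_lt_succ.ne' (p.injective (hπ h))
    have hprod : ((L ++ [i]).map (adjTrans n)).prod = p * adjTrans n i := by simp [hp]
    have hword : π ∘ demazureWord hD (L ++ [i]) = (π ∘ demazureWord hD L) ∘ D i :=
      funext fun Q => congrArg π (demazureWord_append_singleton_apply hD L i Q)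
    have hstep : twistedEval π p ∘ D i =
        d⁻¹ • (twistedEval π p - twistedEval π (p * adjTrans n i)) :=
      (hD i).twistedEval_comp i.castSucc_lt_succ.ne hπ p
    have hlow : twistedEval π p ∈ inversionFiltration π (L.length + 1) :=
      twistedEval_mem_inversionFiltration (Nat.lt_succ_of_le (inversions_prod_le_length L))
    refine ⟨-(c * d⁻¹), neg_ne_zero.2 (mul_ne_zero hc (inv_ne_zero hd)), ?_⟩
    rw [hprod, hword, List.length_append, List.length_singleton]
    convert add_mem (comp_mem_inversionFiltration hD hπ i hmem)
      (Submodule.smul_mem _ (c * d⁻¹) hlow) using 1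
    have hcomp : (π ∘ demazureWord hD L - c • twistedEval π p) ∘ D i =
        (π ∘ demazureWord hD L) ∘ D i - c • (twistedEval π p ∘ D i) := rfl
    rw [hcomp, hstep]
    module

theorem linearIndependent_comp_demazureWord
    (hD : ∀ i, IsDemazureOperator i.castSucc i.succ (D i))
    (hπ : Function.Injective fun j => π (X j)) {l : Equiv.Perm (Fin (n + 1)) → List (Fin n)}
    (hred : ∀ w, ((l w).map (adjTrans n)).prod = w ∧ (l w).length = inversions n w) :
    LinearIndependent K fun w => π ∘ demazureWord hD (l w) :=
  linearIndependent_of_triangular (inversions n) (linearIndependent_twistedEval hπ) fun w => by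
    simpa only [hred, inversionFiltration] using exists_comp_demazureWord_sub_smul_mem hD hπ (l w)

end Triangular

end Demazure

section Determinant

variable {σ R : Type*} [CommRing R]

theorem totalDegree_det_le {ι : Type*} [Fintype ι] [DecidableEq ι]
    {M : Matrix ι ι (MvPolynomial σ R)} {r c : ι → ℕ}
    (h : ∀ i j, M i j ≠ 0 → (M i j).totalDegree + r i ≤ c j) :
    M.det.totalDegree ≤ ∑ j, c j - ∑ i, r i := by
  rw [Matrix.det_apply]
  refine totalDegree_finsetSum_le fun e _ => (totalDegree_smul_le _ _).trans ?_
  obtain hzero | hne := eq_or_ne (∏ j, M (e j) j) 0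
  · simp only [hzero, totalDegree_zero, Nat.zero_le]
  have hentry (j : ι) : (M (e j) j).totalDegree + r (e j) ≤ c j :=
    h _ _ fun h0 => hne (Finset.prod_eq_zero (Finset.mem_univ j) h0)
  calc (∏ j, M (e j) j).totalDegree
      ≤ ∑ j, (M (e j) j).totalDegree := totalDegree_finsetProd _ _
    _ ≤ ∑ j, c j - ∑ j, r (e j) := by
      rw [Nat.le_sub_iff_add_le (Finset.sum_le_sum fun j _ => le_of_add_le_right (hentry j)),
        ← Finset.sum_add_distrib]
      exact Finset.sum_le_sum fun j _ => hentry j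
    _ = ∑ j, c j - ∑ i, r i := by rw [Equiv.sum_comp e r]

theorem isUnit_of_totalDegree_eq_zero {f : MvPolynomial σ R} (hf : f.totalDegree = 0)
    (h : ∀ m : Ideal R, m.IsMaximal → MvPolynomial.map (Ideal.Quotient.mk m) f ≠ 0) :
    IsUnit f := by
  rw [totalDegree_eq_zero_iff_eq_C] at hf
  rw [hf]
  refine IsUnit.map C ?_
  by_contra hunit
  obtain ⟨m, hm, hmem⟩ := exists_max_ideal_of_mem_nonunits hunit
  apply h m hm
  rw [hf, map_C, Ideal.Quotient.eq_zero_iff_mem.2 hmem, C_0]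

variable {n : ℕ} {D : Fin n → MvPolynomial (Fin (n + 1)) R → MvPolynomial (Fin (n + 1)) R}

/-- The values of the Demazure operators of the words `l w` at the staircase monomials, which `e`
enumerates by permutations. -/
noncomputable def demazureMatrix (hD : ∀ i, IsDemazureOperator i.castSucc i.succ (D i))
    (l : Equiv.Perm (Fin (n + 1)) → List (Fin n))
    (e : Equiv.Perm (Fin (n + 1)) ≃ StaircaseExponent (n + 1)) :
    Matrix (Equiv.Perm (Fin (n + 1))) (Equiv.Perm (Fin (n + 1))) (MvPolynomial (Fin (n + 1)) R) :=
  evalMatrix (fun w => demazureWord hD (l w)) (staircaseMonomial R ∘ e)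

theorem totalDegree_det_demazureMatrix (hD : ∀ i, IsDemazureOperator i.castSucc i.succ (D i))
    {l : Equiv.Perm (Fin (n + 1)) → List (Fin n)} (hlen : ∀ w, (l w).length = inversions n w)
    (e : Equiv.Perm (Fin (n + 1)) ≃ StaircaseExponent (n + 1)) :
    (demazureMatrix hD l e).det.totalDegree = 0 := by
  have hentry (w w' : Equiv.Perm (Fin (n + 1))) (h : demazureMatrix hD l e w w' ≠ 0) :
      (demazureMatrix hD l e w w').totalDegree + inversions n w ≤ ∑ i, (e w' i : ℕ) := by
    rw [← hlen]
    exact (totalDegree_demazureWord_add_length_le hD h).trans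
      (totalDegree_staircaseMonomial_le (e w'))
  have hdet := totalDegree_det_le hentry
  rwa [sum_inversions, e.sum_comp fun a => ∑ i, (a i : ℕ), Nat.sub_self, Nat.le_zero] at hdet

theorem isUnit_det_demazureMatrix (hD : ∀ i, IsDemazureOperator i.castSucc i.succ (D i))
    {l : Equiv.Perm (Fin (n + 1)) → List (Fin n)}
    (hred : ∀ w, ((l w).map (adjTrans n)).prod = w ∧ (l w).length = inversions n w)
    (e : Equiv.Perm (Fin (n + 1)) ≃ StaircaseExponent (n + 1)) :
    IsUnit (demazureMatrix hD l e).det := by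
  have hdeg := totalDegree_det_demazureMatrix hD (fun w => (hred w).2) e
  refine isUnit_of_totalDegree_eq_zero hdeg fun m _ h => ?_
  let := Ideal.Quotient.field m
  let K := FractionRing (MvPolynomial (Fin (n + 1)) (R ⧸ m))
  let π : MvPolynomial (Fin (n + 1)) R →+* K :=
    (algebraMap _ K).comp (MvPolynomial.map (Ideal.Quotient.mk m))
  have hπ : Function.Injective fun j => π (X j) := by
    simpa [π, Function.comp_def] using
      (IsFractionRing.injective (MvPolynomial (Fin (n + 1)) (R ⧸ m)) K).comp X_injective
  refine map_det_evalMatrix_ne_zero (span_staircaseMonomial R e) π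
    (linearIndependent_comp_demazureWord hD hπ hred) ?_
  change π (demazureMatrix hD l e).det = 0
  rw [RingHom.comp_apply, h, map_zero]

end Determinant

theorem demazure_operators_basis_of_endomorphisms_general {R : Type*} [CommRing R] (n : ℕ)
    (D : Fin n → MvPolynomial (Fin (n + 1)) R → MvPolynomial (Fin (n + 1)) R)
    (hD : ∀ i, IsDemazureOperator i.castSucc i.succ (D i))
    (l : Equiv.Perm (Fin (n + 1)) → List (Fin n))
    (hred : ∀ w, ((l w).map (adjTrans n)).prod = w ∧ (l w).length = inversions n w)
    (φ : MvPolynomial (Fin (n + 1)) R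
        →ₗ[symmetricSubalgebra (Fin (n + 1)) R] MvPolynomial (Fin (n + 1)) R) :
    ∃! P : Equiv.Perm (Fin (n + 1)) → MvPolynomial (Fin (n + 1)) R,
      ∀ Q : MvPolynomial (Fin (n + 1)) R,
        φ Q = ∑ w : Equiv.Perm (Fin (n + 1)), P w * (l w).foldr (fun i Q' => D i Q') Q := by
  let e : Equiv.Perm (Fin (n + 1)) ≃ StaircaseExponent (n + 1) := Fintype.equivOfCardEq <| by
    rw [Fintype.card_perm, Fintype.card_fin, card_staircaseExponent]
  simpa [LinearMap.ext_iff, demazureWord_apply] using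
    existsUnique_eq_sum_smul (span_staircaseMonomial R e) (isUnit_det_demazureMatrix hD hred e) φ

/-- Every endomorphism of `P_n = ℤ[X_1, …, X_{n+1}]` that is linear over the subring
`P_n^{S_{n+1}}` of symmetric polynomials can be written uniquely as `∑_w m_{P_w} ∘ ∂_w`
with `P_w ∈ P_n`: the composite Demazure operators `(∂_w)_w` form a basis of
`End_{P_n^{S_{n+1}}}(P_n)` as a free left `P_n`-module. -/
theorem demazure_operators_basis_of_endomorphisms (n : ℕ)
    (D : Fin n → MvPolynomial (Fin (n + 1)) ℤ →ₗ[ℤ] MvPolynomial (Fin (n + 1)) ℤ)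
    (hD : ∀ (i : Fin n) (P : MvPolynomial (Fin (n + 1)) ℤ),
      (X i.succ - X i.castSucc) * D i P =
        P - rename (Equiv.swap i.castSucc i.succ) P)
    (l : Equiv.Perm (Fin (n + 1)) → List (Fin n))
    (hred : ∀ w, ((l w).map (adjTrans n)).prod = w ∧ (l w).length = inversions n w)
    (φ : MvPolynomial (Fin (n + 1)) ℤ
        →ₗ[symmetricSubalgebra (Fin (n + 1)) ℤ] MvPolynomial (Fin (n + 1)) ℤ) :
    ∃! P : Equiv.Perm (Fin (n + 1)) → MvPolynomial (Fin (n + 1)) ℤ,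
      ∀ Q : MvPolynomial (Fin (n + 1)) ℤ,
        φ Q = ∑ w : Equiv.Perm (Fin (n + 1)), P w * (l w).foldr (fun i Q' => D i Q') Q :=
  demazure_operators_basis_of_endomorphisms_general n (fun i => D i) hD l hred φ
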